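/- arXiv:1703.00980 — 12 statements merged into one kernel-verified Lean document; each statement's English description precedes it below -/
import Mathlib

section
/- Let n ≥ 1, let W be an n×n real matrix with zero diagonal, nonnegative entries, and each row summing to 1, let B = diag(2b_1, …, 2b_n), Γ = diag(γ_1, …, γ_n) with b_i > 0, γ_i ≥ 0, and let a, p ∈ ℝⁿ. Then x* = (B + 2Γ - ΓW)⁻¹(a - p) is the unique vector x ∈ ℝⁿ satisfying the simultaneous best-response equations x_i = (a_i - p_i + γ_i Σ_j w_ij x_j) / (2(b_i + γ_i)) for all i; i.e., x* constitutes the unique Nash equilibrium of the second-stage consumption game. -/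
open Matrix

/-!
Clearing denominators, the best-response equations say exactly `(B + 2Γ - ΓW) x = a - p`.
Row `i` of this matrix has diagonal entry `2 bᵢ + 2 γᵢ` (as `wᵢᵢ = 0`) and off-diagonal absolute row
sum `γᵢ ∑ⱼ wᵢⱼ = γᵢ`, so the matrix is strictly diagonally dominant. It is therefore invertible
(`det_ne_zero_of_sum_row_lt_diag`), and the linear system has exactly one solution.
-/

/-- `x* = (B + 2Γ - ΓW)⁻¹ (a - p)` is the unique Nash equilibrium
of the second-stage consumption game, i.e. the unique simultaneous solution of
the best-response equations
`xᵢ = (aᵢ - pᵢ + γᵢ ∑ⱼ wᵢⱼ xⱼ) / (2 (bᵢ + γᵢ))`. -/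
theorem nash_equilibrium_second_stage
    (n : ℕ) (hn : 1 ≤ n)
    (W : Matrix (Fin n) (Fin n) ℝ)
    (hWdiag : ∀ i, W i i = 0)
    (hWnonneg : ∀ i j, 0 ≤ W i j)
    (hWrow : ∀ i, ∑ j, W i j = 1)
    (b γ : Fin n → ℝ) (hb : ∀ i, 0 < b i) (hγ : ∀ i, 0 ≤ γ i)
    (B : Matrix (Fin n) (Fin n) ℝ) (hB : B = Matrix.diagonal (fun i => 2 * b i))
    (Γ : Matrix (Fin n) (Fin n) ℝ) (hΓ : Γ = Matrix.diagonal γ)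
    (a p : Fin n → ℝ)
    (xstar : Fin n → ℝ) (hxstar : xstar = (B + 2 • Γ - Γ * W)⁻¹ *ᵥ (a - p)) :
    (∀ i, xstar i = (a i - p i + γ i * ∑ j, W i j * xstar j) / (2 * (b i + γ i)))
      ∧ ∀ x : Fin n → ℝ,
        (∀ i, x i = (a i - p i + γ i * ∑ j, W i j * x j) / (2 * (b i + γ i))) →
        x = xstar := by
  have hM : ∀ i j, (B + 2 • Γ - Γ * W) i j
      = (if i = j then 2 * b i + 2 * γ i else 0) - γ i * W i j := by
    intro i j
    subst hB hΓ
    rw [two_nsmul]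
    by_cases h : i = j
    · subst h
      simp [Matrix.sub_apply, Matrix.add_apply, Matrix.diagonal_mul, two_mul]
    · simp [Matrix.sub_apply, Matrix.add_apply, Matrix.diagonal_mul, h]
  have hdet : (B + 2 • Γ - Γ * W).det ≠ 0 := by
    apply det_ne_zero_of_sum_row_lt_diag
    intro k
    have hoff : ∑ j ∈ Finset.univ.erase k, ‖(B + 2 • Γ - Γ * W) k j‖ = γ k := by
      calc _ = ∑ j ∈ Finset.univ.erase k, γ k * W k j := by
            refine Finset.sum_congr rfl fun j hj => ?_
            rw [hM, if_neg (Finset.ne_of_mem_erase hj).symm, zero_sub, norm_neg,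
              Real.norm_of_nonneg (mul_nonneg (hγ k) (hWnonneg k j))]
        _ = ∑ j, γ k * W k j := Finset.sum_erase _ (by rw [hWdiag, mul_zero])
        _ = γ k := by rw [← Finset.mul_sum, hWrow, mul_one]
    rw [hoff, hM, if_pos rfl, hWdiag, mul_zero, sub_zero]
    have h1 := hb k
    have h2 := hγ k
    rw [Real.norm_of_nonneg (by positivity)]
    linarith
  have hunit : IsUnit (B + 2 • Γ - Γ * W).det := isUnit_iff_ne_zero.mpr hdet
  have hmul : ∀ (x : Fin n → ℝ) i, ((B + 2 • Γ - Γ * W) *ᵥ x) i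
      = (2 * b i + 2 * γ i) * x i - γ i * ∑ j, W i j * x j := by
    intro x i
    simp only [Matrix.mulVec, dotProduct, hM, sub_mul, Finset.sum_sub_distrib, ite_mul, zero_mul,
      Finset.sum_ite_eq, Finset.mem_univ, if_true, Finset.mul_sum, mul_assoc]
  have hiff : ∀ x : Fin n → ℝ,
      (∀ i, x i = (a i - p i + γ i * ∑ j, W i j * x j) / (2 * (b i + γ i)))
        ↔ (B + 2 • Γ - Γ * W) *ᵥ x = a - p := by
    intro x
    rw [funext_iff]
    refine forall_congr' fun i => ?_
    have hpos : 2 * (b i + γ i) ≠ 0 := by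
      have h1 := hb i
      have h2 := hγ i
      positivity
    rw [hmul, eq_div_iff hpos, Pi.sub_apply]
    constructor <;> intro h <;> linarith
  refine ⟨(hiff xstar).mpr ?_, fun x hx => ?_⟩
  · rw [hxstar, Matrix.mulVec_mulVec, Matrix.mul_nonsing_inv _ hunit, Matrix.one_mulVec]
  · rw [hxstar, ← (hiff x).mp hx, Matrix.mulVec_mulVec, Matrix.nonsing_inv_mul _ hunit,
      Matrix.one_mulVec]
end

section
/- Let n ≥ 1, let W be an n×n real matrix with zero diagonal, nonnegative entries, and each row summing to 1, let B = diag(2b_1, …, 2b_n), Γ = diag(γ_1, …, γ_n), C = diag(c_1, …, c_n) with b_i > 0, γ_i ≥ 0, c_i ≥ 0, and let a ∈ ℝⁿ. Define the load-serving entity's profit Π(p) = pᵀx(p) - x(p)ᵀ C x(p) where x(p) = (B + 2Γ - ΓW)⁻¹(a - p). Assume the symmetric matrix M := C + B + 2Γ - WᵀΓ/2 - ΓW/2 is positive definite, and set Z = M⁻¹. Then the price vector p* = a/2 + CZ a/2 - WᵀΓ Z a/4 + ΓW Z a/4 satisfies Π(p*) ≥ Π(p) for every p ∈ ℝⁿ,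 and the corresponding consumption is x(p*) = M⁻¹ a/2. -/
open Matrix

/-!
Prices and consumptions are in bijection: `A := B + 2Γ - ΓW` is strictly diagonally dominant by rows
(row `i` has diagonal entry `2 bᵢ + 2 γᵢ` and off-diagonal absolute sum `γᵢ`), hence invertible, so
`p = a - A x(p)`. In terms of the consumption `y = x(p)` the profit is `a ⬝ y - y ⬝ (A + C) y`, and
only the symmetric part of `A + C`, which is `M`, contributes to the quadratic form. The concave
quadratic `a ⬝ y - y ⬝ M y` is maximal at `y* = M⁻¹ a / 2` by completing the square, and `p*` is
exactly the price `a - A y*`.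
-/

/-- `B + 2Γ - ΓW` is nonsingular, being strictly diagonally dominant by rows. -/
lemma isUnit_det_interaction {n : ℕ} (W : Matrix (Fin n) (Fin n) ℝ)
    (hWdiag : ∀ i, W i i = 0) (hWnonneg : ∀ i j, 0 ≤ W i j) (hWrow : ∀ i, ∑ j, W i j = 1)
    (b γ : Fin n → ℝ) (hb : ∀ i, 0 < b i) (hγ : ∀ i, 0 ≤ γ i) :
    IsUnit (diagonal (fun i => 2 * b i) + 2 • diagonal γ - diagonal γ * W).det := by
  rw [isUnit_iff_ne_zero]
  apply det_ne_zero_of_sum_row_lt_diag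
  intro k
  have hoff : ∑ j ∈ Finset.univ.erase k,
      ‖(diagonal (fun i => 2 * b i) + 2 • diagonal γ - diagonal γ * W) k j‖ = γ k := by
    calc _ = ∑ j ∈ Finset.univ.erase k, γ k * W k j := by
          refine Finset.sum_congr rfl fun j hj => ?_
          have hjk : k ≠ j := (Finset.ne_of_mem_erase hj).symm
          simp [two_nsmul, -nsmul_eq_mul, diagonal_apply_ne _ hjk, diagonal_mul, abs_of_nonneg,
            hγ, hWnonneg]
      _ = ∑ j, γ k * W k j := Finset.sum_erase _ (by simp [hWdiag])
      _ = γ k := by rw [← Finset.mul_sum, hWrow, mul_one]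
  have hdiag : (diagonal (fun i => 2 * b i) + 2 • diagonal γ - diagonal γ * W) k k
      = 2 * b k + 2 * γ k := by
    simp [two_nsmul, -nsmul_eq_mul, diagonal_mul, hWdiag]
    ring
  rw [hoff, hdiag, Real.norm_eq_abs]
  have h1 := hb k
  have h2 := hγ k
  exact lt_of_lt_of_le (by linarith) (le_abs_self _)

/-- Completing the square: `a ⬝ y - y ⬝ M y` is maximal where its gradient `a - 2 M y` vanishes. -/
lemma quadratic_le_of_stationary {n : ℕ} {M : Matrix (Fin n) (Fin n) ℝ} (hM : M.PosDef)
    {a z : Fin n → ℝ} (hz : M *ᵥ z = (1 / 2 : ℝ) • a) (y : Fin n → ℝ) :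
    a ⬝ᵥ y - y ⬝ᵥ (M *ᵥ y) ≤ a ⬝ᵥ z - z ⬝ᵥ (M *ᵥ z) := by
  have hpos : 0 ≤ (y - z) ⬝ᵥ (M *ᵥ (y - z)) := by
    simpa using hM.posSemidef.dotProduct_mulVec_nonneg (y - z)
  have hT : Mᵀ = M := by simpa using hM.isHermitian.eq
  have hsymm : z ⬝ᵥ (M *ᵥ y) = (1 / 2 : ℝ) * (a ⬝ᵥ y) := by
    rw [dotProduct_mulVec, ← mulVec_transpose, hT, hz, smul_dotProduct, smul_eq_mul]
  simp only [mulVec_sub, sub_dotProduct, dotProduct_sub, hsymm, hz, dotProduct_smul,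
    smul_eq_mul] at hpos ⊢
  rw [dotProduct_comm y a, dotProduct_comm z a] at hpos
  rw [dotProduct_comm z a]
  linarith


/-- Under perfect price discrimination, the price vector
`p* = a/2 + CZa/2 - WᵀΓZa/4 + ΓWZa/4` with `Z = M⁻¹`,
`M = C + B + 2Γ - WᵀΓ/2 - ΓW/2`, maximizes the load-serving entity's profit
`Π(p) = pᵀ x(p) - x(p)ᵀ C x(p)`, where `x(p) = (B + 2Γ - ΓW)⁻¹ (a - p)`,
and the corresponding consumption is `x(p*) = M⁻¹ a / 2`. -/
theorem perfect_price_discrimination_optimal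
    (n : ℕ) (hn : 1 ≤ n)
    (W : Matrix (Fin n) (Fin n) ℝ)
    (hWdiag : ∀ i, W i i = 0)
    (hWnonneg : ∀ i j, 0 ≤ W i j)
    (hWrow : ∀ i, ∑ j, W i j = 1)
    (b γ c : Fin n → ℝ) (hb : ∀ i, 0 < b i) (hγ : ∀ i, 0 ≤ γ i)
    (hc : ∀ i, 0 ≤ c i)
    (B : Matrix (Fin n) (Fin n) ℝ) (hB : B = Matrix.diagonal (fun i => 2 * b i))
    (Γ : Matrix (Fin n) (Fin n) ℝ) (hΓ : Γ = Matrix.diagonal γ)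
    (C : Matrix (Fin n) (Fin n) ℝ) (hC : C = Matrix.diagonal c)
    (a : Fin n → ℝ)
    (x : (Fin n → ℝ) → (Fin n → ℝ))
    (hx : ∀ p, x p = (B + 2 • Γ - Γ * W)⁻¹ *ᵥ (a - p))
    (profit : (Fin n → ℝ) → ℝ)
    (hprofit : ∀ p, profit p = p ⬝ᵥ x p - x p ⬝ᵥ (C *ᵥ x p))
    (M : Matrix (Fin n) (Fin n) ℝ)
    (hM : M = C + B + 2 • Γ - (1 / 2 : ℝ) • (Wᵀ * Γ) - (1 / 2 : ℝ) • (Γ * W))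
    (hMpd : M.PosDef)
    (Z : Matrix (Fin n) (Fin n) ℝ) (hZ : Z = M⁻¹)
    (pstar : Fin n → ℝ)
    (hpstar : pstar = (1 / 2 : ℝ) • a + (1 / 2 : ℝ) • ((C * Z) *ᵥ a)
      - (1 / 4 : ℝ) • ((Wᵀ * Γ * Z) *ᵥ a) + (1 / 4 : ℝ) • ((Γ * W * Z) *ᵥ a)) :
    (∀ p : Fin n → ℝ, profit p ≤ profit pstar) ∧
      x pstar = (1 / 2 : ℝ) • (M⁻¹ *ᵥ a) := by
  set A := B + 2 • Γ - Γ * W with hA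
  have hdet : IsUnit A.det := by
    rw [hA, hB, hΓ]
    exact isUnit_det_interaction W hWdiag hWnonneg hWrow b γ hb hγ
  have hAx : ∀ p, A *ᵥ x p = a - p := fun p => by
    rw [hx, mulVec_mulVec, mul_nonsing_inv _ hdet, one_mulVec]
  -- `M` and `A + C` differ by the antisymmetric matrix `(WᵀΓ - ΓW) / 2`.
  have hAM : A = M - C + (1 / 2 : ℝ) • (Wᵀ * Γ) - (1 / 2 : ℝ) • (Γ * W) := by
    rw [hA, hM]
    module
  have hanti : ∀ y : Fin n → ℝ, y ⬝ᵥ ((Wᵀ * Γ) *ᵥ y) = y ⬝ᵥ ((Γ * W) *ᵥ y) := fun y => by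
    have hT : (Γ * W)ᵀ = Wᵀ * Γ := by rw [transpose_mul, hΓ, diagonal_transpose]
    rw [← hT, mulVec_transpose, dotProduct_comm, ← dotProduct_mulVec]
  have hprofit' : ∀ p, profit p = a ⬝ᵥ x p - x p ⬝ᵥ (M *ᵥ x p) := fun p => by
    have hquad : x p ⬝ᵥ (A *ᵥ x p) = x p ⬝ᵥ (M *ᵥ x p) - x p ⬝ᵥ (C *ᵥ x p) := by
      rw [hAM]
      simp only [sub_mulVec, add_mulVec, smul_mulVec, dotProduct_sub, dotProduct_add,
        dotProduct_smul, hanti]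
      ring
    have hpx : p ⬝ᵥ x p = a ⬝ᵥ x p - x p ⬝ᵥ (A *ᵥ x p) := by
      rw [dotProduct_comm (x p), hAx, sub_dotProduct]
      ring
    rw [hprofit, hpx, hquad]
    ring
  have hMdet : IsUnit M.det := (isUnit_iff_isUnit_det M).1 hMpd.isUnit
  have hMZ : M *ᵥ (Z *ᵥ a) = a := by
    rw [hZ, mulVec_mulVec, mul_nonsing_inv _ hMdet, one_mulVec]
  have hxstar : x pstar = (1 / 2 : ℝ) • (M⁻¹ *ᵥ a) := by
    have hAstar : A *ᵥ ((1 / 2 : ℝ) • (Z *ᵥ a)) = a - pstar := by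
      rw [hpstar, hAM]
      simp only [sub_mulVec, add_mulVec, smul_mulVec, mulVec_smul, hMZ, ← mulVec_mulVec]
      module
    rw [hx, ← hAstar, mulVec_mulVec, nonsing_inv_mul _ hdet, one_mulVec, hZ]
  refine ⟨fun p => ?_, hxstar⟩
  rw [hprofit', hprofit' pstar]
  refine quadratic_le_of_stationary hMpd ?_ _
  rw [hxstar, mulVec_smul, ← hZ, hMZ]
end

section
/- Let n ≥ 1, let W be a symmetric n×n real matrix with zero diagonal, nonnegative entries, and each row summing to 1, let B = diag(2b_1, …, 2b_n), C = diag(c_1, …, c_n) with b_i > 0, c_i ≥ 0, let γ ≥ 0, Γ = γI, and let a ∈ ℝⁿ. Define Π(p) = pᵀx(p) - x(p)ᵀ C x(p) with x(p) = (B + 2γI - γW)⁻¹(a - p). Then the maximum of Π over all p ∈ ℝⁿ equals Π* = (1/4) aᵀ (C + B + 2γI - γW)⁻¹ a. -/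
/-!
Write `M = B + 2γI - γW` and `A = C + M`. Since the rows and columns of `W` sum to `1`,
`xᵀWx ≤ ∑ xᵢ²` by `2 xᵢ xⱼ ≤ xᵢ² + xⱼ²`, so both `M` and `A` are positive definite
(`posDef_network`). In particular `p ↦ x(p)` is a bijection with inverse `x ↦ a - Mx`, and in
the variable `x` the profit is the strictly concave quadratic `aᵀx - xᵀAx`. Completing the square,
`aᵀx - xᵀAx = ¼ aᵀA⁻¹a - (x - ½A⁻¹a)ᵀ A (x - ½A⁻¹a)` (`quadratic_eq_sub_square`), so the maximum is
`¼ aᵀA⁻¹a`, attained at `x = ½A⁻¹a`.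
-/

open Matrix

/-- For a symmetric stochastic `W`, each pair of indices contributes
`W i j * x i * x j ≤ W i j * (x i ^ 2 + x j ^ 2) / 2`; summing gives `xᵀWx ≤ xᵀx`. -/
lemma dotProduct_mulVec_le_of_symm_stochastic {n : ℕ} (W : Matrix (Fin n) (Fin n) ℝ)
    (hWsymm : Wᵀ = W) (hWnonneg : ∀ i j, 0 ≤ W i j) (hWrow : ∀ i, ∑ j, W i j = 1)
    (x : Fin n → ℝ) : x ⬝ᵥ (W *ᵥ x) ≤ x ⬝ᵥ x := by
  have hrow : ∑ i, ∑ j, W i j * x i ^ 2 = x ⬝ᵥ x := by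
    simp only [← Finset.sum_mul, hWrow, one_mul, dotProduct, sq]
  have hcol : ∑ i, ∑ j, W i j * x j ^ 2 = x ⬝ᵥ x := by
    rw [← hrow, Finset.sum_comm]
    refine Finset.sum_congr rfl fun j _ => Finset.sum_congr rfl fun i _ => ?_
    rw [← congrFun (congrFun hWsymm i) j, transpose_apply]
  have hle : x ⬝ᵥ (W *ᵥ x) ≤ ∑ i, ∑ j, (W i j * x i ^ 2 + W i j * x j ^ 2) / 2 := by
    simp only [dotProduct, mulVec, Finset.mul_sum]
    refine Finset.sum_le_sum fun i _ => Finset.sum_le_sum fun j _ => ?_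
    nlinarith [mul_nonneg (hWnonneg i j) (sq_nonneg (x i - x j))]
  simp only [← Finset.sum_div, Finset.sum_add_distrib, hrow, hcol] at hle
  linarith

lemma posDef_network {n : ℕ} (W : Matrix (Fin n) (Fin n) ℝ)
    (hWsymm : Wᵀ = W) (hWnonneg : ∀ i j, 0 ≤ W i j) (hWrow : ∀ i, ∑ j, W i j = 1)
    (d : Fin n → ℝ) (hd : ∀ i, 0 < d i) (γ : ℝ) (hγ : 0 ≤ γ) :
    (diagonal d + (2 * γ) • (1 : Matrix (Fin n) (Fin n) ℝ) - γ • W).PosDef := by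
  -- Split off the positive definite diagonal; the rest is `γ (2I - W)`, which is semidefinite.
  rw [add_sub_assoc]
  refine (PosDef.diagonal hd).add_posSemidef (.of_dotProduct_mulVec_nonneg ?_ fun x => ?_)
  · simp [IsHermitian, conjTranspose_eq_transpose_of_trivial, hWsymm]
  · have h := dotProduct_mulVec_le_of_symm_stochastic W hWsymm hWnonneg hWrow x
    have h0 : 0 ≤ x ⬝ᵥ x := Finset.sum_nonneg fun i _ => mul_self_nonneg (x i)
    simp only [star_trivial, sub_mulVec, smul_mulVec, one_mulVec, dotProduct_sub,
      dotProduct_smul, smul_eq_mul]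
    nlinarith [mul_nonneg hγ h0, mul_le_mul_of_nonneg_left h hγ]

/-- Completing the square for a symmetric matrix `A`, where `u` plays the role of `A⁻¹ a`. -/
lemma quadratic_eq_sub_square {n : ℕ} (A : Matrix (Fin n) (Fin n) ℝ) (hA : Aᵀ = A)
    (a u : Fin n → ℝ) (hu : A *ᵥ u = a) (x : Fin n → ℝ) :
    a ⬝ᵥ x - x ⬝ᵥ (A *ᵥ x) = (1 / 4 : ℝ) * (a ⬝ᵥ u) -
      (x - (1 / 2 : ℝ) • u) ⬝ᵥ (A *ᵥ (x - (1 / 2 : ℝ) • u)) := by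
  have h : u ⬝ᵥ (A *ᵥ x) = a ⬝ᵥ x := by
    rw [dotProduct_mulVec, ← mulVec_transpose, hA, hu]
  simp only [mulVec_sub, mulVec_smul, hu, sub_dotProduct, dotProduct_sub, smul_dotProduct,
    dotProduct_smul, smul_eq_mul, h, dotProduct_comm x a, dotProduct_comm u a]
  ring

/-- For a symmetric network and uniform peer-effect strength
`Γ = γI`, the maximal profit under perfect price discrimination equals
`Π* = (1/4) aᵀ (C + B + 2γI - γW)⁻¹ a`. -/
theorem optimal_profit_symmetric_network
    (n : ℕ) (hn : 1 ≤ n)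
    (W : Matrix (Fin n) (Fin n) ℝ) (hWsymm : Wᵀ = W)
    (hWdiag : ∀ i, W i i = 0)
    (hWnonneg : ∀ i j, 0 ≤ W i j)
    (hWrow : ∀ i, ∑ j, W i j = 1)
    (b c : Fin n → ℝ) (hb : ∀ i, 0 < b i) (hc : ∀ i, 0 ≤ c i)
    (γ : ℝ) (hγ : 0 ≤ γ)
    (B : Matrix (Fin n) (Fin n) ℝ) (hB : B = Matrix.diagonal (fun i => 2 * b i))
    (C : Matrix (Fin n) (Fin n) ℝ) (hC : C = Matrix.diagonal c)
    (a : Fin n → ℝ)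
    (x : (Fin n → ℝ) → (Fin n → ℝ))
    (hx : ∀ p, x p = (B + (2 * γ) • (1 : Matrix (Fin n) (Fin n) ℝ) - γ • W)⁻¹ *ᵥ (a - p))
    (profit : (Fin n → ℝ) → ℝ)
    (hprofit : ∀ p, profit p = p ⬝ᵥ x p - x p ⬝ᵥ (C *ᵥ x p)) :
    IsGreatest (Set.range profit)
      ((1 / 4 : ℝ) *
        (a ⬝ᵥ ((C + B + (2 * γ) • (1 : Matrix (Fin n) (Fin n) ℝ) - γ • W)⁻¹ *ᵥ a))) := by
  subst hB hC
  have hMpos := posDef_network W hWsymm hWnonneg hWrow (fun i => 2 * b i)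
    (fun i => by linarith [hb i]) γ hγ
  have hApos := posDef_network W hWsymm hWnonneg hWrow (fun i => c i + 2 * b i)
    (fun i => by linarith [hb i, hc i]) γ hγ
  rw [← diagonal_add] at hApos
  set M := diagonal (fun i => 2 * b i) + (2 * γ) • (1 : Matrix (Fin n) (Fin n) ℝ) - γ • W with hM
  set A := diagonal c + diagonal (fun i => 2 * b i) +
    (2 * γ) • (1 : Matrix (Fin n) (Fin n) ℝ) - γ • W with hA
  have hAM : A = M + diagonal c := by rw [hA, hM]; abel
  have hMdet : IsUnit M.det := M.isUnit_iff_isUnit_det.mp hMpos.isUnit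
  have hAdet : IsUnit A.det := A.isUnit_iff_isUnit_det.mp hApos.isUnit
  have hAsymm : Aᵀ = A := by
    simpa [conjTranspose_eq_transpose_of_trivial] using hApos.isHermitian.eq
  have hu : A *ᵥ (A⁻¹ *ᵥ a) = a := by
    rw [mulVec_mulVec, mul_nonsing_inv _ hAdet, one_mulVec]
  have hp : ∀ p, p = a - M *ᵥ x p := fun p => by
    rw [hx, mulVec_mulVec, mul_nonsing_inv _ hMdet, one_mulVec, sub_sub_cancel]
  have hprofit_eq : ∀ p, profit p = a ⬝ᵥ x p - x p ⬝ᵥ (A *ᵥ x p) := fun p => by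
    have h : p ⬝ᵥ x p = a ⬝ᵥ x p - x p ⬝ᵥ (M *ᵥ x p) := by
      rw [dotProduct_comm (x p) (M *ᵥ x p), ← sub_dotProduct, ← hp p]
    rw [hprofit, h, hAM, add_mulVec, dotProduct_add]
    ring
  constructor
  · -- The price that induces the consumption `½ A⁻¹ a`.
    refine ⟨a - M *ᵥ ((1 / 2 : ℝ) • (A⁻¹ *ᵥ a)), ?_⟩
    rw [hprofit_eq, quadratic_eq_sub_square A hAsymm a _ hu, hx, sub_sub_cancel, mulVec_mulVec,
      nonsing_inv_mul _ hMdet, one_mulVec]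
    simp
  · rintro _ ⟨p, rfl⟩
    rw [hprofit_eq, quadratic_eq_sub_square A hAsymm a _ hu]
    have h := hApos.posSemidef.dotProduct_mulVec_nonneg (x p - (1 / 2 : ℝ) • (A⁻¹ *ᵥ a))
    rw [star_trivial] at h
    linarith
end

section
/- Let n ≥ 1, let W be a symmetric n×n real matrix with zero diagonal, nonnegative entries, and each row summing to 1, let B = diag(2b_1, …, 2b_n), C = diag(c_1, …, c_n) with b_i > 0, c_i ≥ 0, let γ ≥ 0, and suppose all users have the same utility intercept, a = ā·1 with ā > 0. Set A = B + 2γI - γW and define the single-price profit Π_u(p) = p·1ᵀx(p) - x(p)ᵀ C x(p) with x(p) = A⁻¹(a - p·1). Then Π_u is uniquely maximized over p ∈ ℝ at p_u* = [1 - (1ᵀA⁻¹1) / (2·1ᵀ(A⁻¹ + A⁻¹CA⁻¹)1)]·ā, and the corresponding consumption equilibrium is x(p_u*) = (ā - p_u*)·A⁻¹1. -/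
/-!
Write `y = A⁻¹1`, `S = 1ᵀy` and `K = yᵀCy ≥ 0`. With equal intercepts, `x(p) = (ā - p) y`, and in the
variable `t = ā - p` the profit is the quadratic `ā S t - (S + K) t²`. Symmetry of `A` identifies
`1ᵀA⁻¹CA⁻¹1` with `K`, so `pstar` is exactly the price at which `t = āS / (2(S + K))`, the vertex.
The vertex is the unique maximum because `S > 0`, which follows from positive definiteness of `A`:
since `W` is symmetric, nonnegative and has unit row sums, `vᵀWv ≤ vᵀv` (`dotProduct_mulVec_le`),
so `vᵀAv ≥ ∑ 2 bᵢ vᵢ²` (`posDef_interaction`).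
-/


open Matrix

/-- A symmetric stochastic matrix has quadratic form at most `vᵀv`: bound each `vᵢvⱼ` by
`(vᵢ² + vⱼ²) / 2` and sum, the symmetry turning the unit row sums into unit column sums. -/
lemma dotProduct_mulVec_le {n : ℕ} (W : Matrix (Fin n) (Fin n) ℝ) (hWsymm : Wᵀ = W)
    (hWnonneg : ∀ i j, 0 ≤ W i j) (hWrow : ∀ i, ∑ j, W i j = 1) (v : Fin n → ℝ) :
    v ⬝ᵥ (W *ᵥ v) ≤ v ⬝ᵥ v := by
  have hs : ∀ i j, W i j = W j i := fun i j => congrFun (congrFun hWsymm j) i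
  have h1 : ∑ i, ∑ j, W i j * v i ^ 2 = v ⬝ᵥ v := by
    simp only [← Finset.sum_mul, hWrow, dotProduct, one_mul, sq]
  have h2 : ∑ i, ∑ j, W i j * v j ^ 2 = v ⬝ᵥ v := by
    rw [Finset.sum_comm, ← h1]
    exact Finset.sum_congr rfl fun i _ => Finset.sum_congr rfl fun j _ => by rw [hs j i]
  have h3 : v ⬝ᵥ (W *ᵥ v) ≤ ∑ i, ∑ j, (W i j * v i ^ 2 + W i j * v j ^ 2) / 2 := by
    simp only [dotProduct, mulVec, Finset.mul_sum]
    refine Finset.sum_le_sum fun i _ => Finset.sum_le_sum fun j _ => ?_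
    nlinarith [mul_nonneg (hWnonneg i j) (sq_nonneg (v i - v j))]
  simp only [← Finset.sum_div, Finset.sum_add_distrib, h1, h2] at h3
  linarith

lemma posDef_interaction {n : ℕ} (W : Matrix (Fin n) (Fin n) ℝ) (hWsymm : Wᵀ = W)
    (hWnonneg : ∀ i j, 0 ≤ W i j) (hWrow : ∀ i, ∑ j, W i j = 1)
    (b : Fin n → ℝ) (hb : ∀ i, 0 < b i) (γ : ℝ) (hγ : 0 ≤ γ) :
    (Matrix.diagonal (fun i => 2 * b i) + (2 * γ) • (1 : Matrix (Fin n) (Fin n) ℝ)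
      - γ • W).PosDef := by
  refine Matrix.PosDef.of_dotProduct_mulVec_pos ?_ fun v hv => ?_
  · simp [Matrix.IsHermitian, Matrix.conjTranspose_eq_transpose_of_trivial, hWsymm]
  · have hB : 0 < v ⬝ᵥ (Matrix.diagonal (fun i => 2 * b i) *ᵥ v) := by
      have h := (Matrix.PosDef.diagonal (d := fun i => 2 * b i)
        fun i => by have := hb i; positivity).dotProduct_mulVec_pos hv
      simpa using h
    have hW := dotProduct_mulVec_le W hWsymm hWnonneg hWrow v
    have hv0 : 0 ≤ v ⬝ᵥ v := Finset.sum_nonneg fun i _ => mul_self_nonneg _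
    simp only [star_trivial, sub_mulVec, add_mulVec, smul_mulVec, one_mulVec, dotProduct_sub,
      dotProduct_add, dotProduct_smul, smul_eq_mul]
    nlinarith [mul_le_mul_of_nonneg_left hW hγ, mul_nonneg hγ hv0]

/-- Profit-maximizing single (uniform) price for a symmetric
network with identical utility intercepts `a = ā·1`:
`p_u* = [1 - (1ᵀA⁻¹1)/(2·1ᵀ(A⁻¹ + A⁻¹CA⁻¹)1)]·ā` uniquely maximizes the
single-price profit, and the corresponding consumption is
`x(p_u*) = (ā - p_u*)·A⁻¹1`, where `A = B + 2γI - γW`. -/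
theorem uniform_price_optimal_identical_intercepts
    (n : ℕ) (hn : 1 ≤ n)
    (W : Matrix (Fin n) (Fin n) ℝ) (hWsymm : Wᵀ = W)
    (hWdiag : ∀ i, W i i = 0)
    (hWnonneg : ∀ i j, 0 ≤ W i j)
    (hWrow : ∀ i, ∑ j, W i j = 1)
    (b c : Fin n → ℝ) (hb : ∀ i, 0 < b i) (hc : ∀ i, 0 ≤ c i)
    (γ : ℝ) (hγ : 0 ≤ γ)
    (B : Matrix (Fin n) (Fin n) ℝ) (hB : B = Matrix.diagonal (fun i => 2 * b i))
    (C : Matrix (Fin n) (Fin n) ℝ) (hC : C = Matrix.diagonal c)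
    (abar : ℝ) (habar : 0 < abar)
    (a : Fin n → ℝ) (ha : a = fun _ => abar)
    (A : Matrix (Fin n) (Fin n) ℝ)
    (hA : A = B + (2 * γ) • (1 : Matrix (Fin n) (Fin n) ℝ) - γ • W)
    (x : ℝ → (Fin n → ℝ))
    (hx : ∀ p : ℝ, x p = A⁻¹ *ᵥ (a - fun _ => p))
    (profit : ℝ → ℝ)
    (hprofit : ∀ p : ℝ, profit p = p * ((fun _ => (1 : ℝ)) ⬝ᵥ x p) - x p ⬝ᵥ (C *ᵥ x p))
    (pstar : ℝ)
    (hpstar : pstar =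
      (1 - ((fun _ => (1 : ℝ)) ⬝ᵥ (A⁻¹ *ᵥ fun _ => (1 : ℝ))) /
        (2 * ((fun _ => (1 : ℝ)) ⬝ᵥ ((A⁻¹ + A⁻¹ * C * A⁻¹) *ᵥ fun _ => (1 : ℝ))))) * abar) :
    (∀ p : ℝ, p ≠ pstar → profit p < profit pstar) ∧
      x pstar = (abar - pstar) • (A⁻¹ *ᵥ fun _ => (1 : ℝ)) := by 
  have hA' : A.PosDef := by
    rw [hA, hB]
    exact posDef_interaction W hWsymm hWnonneg hWrow b hb γ hγ
  set e : Fin n → ℝ := fun _ => 1 with he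
  set y := A⁻¹ *ᵥ e with hy
  have he0 : e ≠ 0 := fun h => one_ne_zero (congrFun h ⟨0, hn⟩)
  have hS : 0 < e ⬝ᵥ y := by simpa using hA'.inv.dotProduct_mulVec_pos he0
  have hK : 0 ≤ y ⬝ᵥ (C *ᵥ y) := by
    rw [hC]
    simp only [dotProduct, mulVec_diagonal]
    exact Finset.sum_nonneg fun i _ => by nlinarith [mul_nonneg (hc i) (mul_self_nonneg (y i))]
  have hsymm : (A⁻¹)ᵀ = A⁻¹ := by
    simpa [Matrix.IsHermitian, Matrix.conjTranspose_eq_transpose_of_trivial] using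
      hA'.inv.isHermitian
  have hden : e ⬝ᵥ ((A⁻¹ + A⁻¹ * C * A⁻¹) *ᵥ e) = e ⬝ᵥ y + y ⬝ᵥ (C *ᵥ y) := by
    rw [add_mulVec, dotProduct_add, ← mulVec_mulVec, ← mulVec_mulVec, ← hy,
      dotProduct_mulVec e A⁻¹ (C *ᵥ y), ← mulVec_transpose, hsymm]
  have hxp : ∀ p, x p = (abar - p) • y := fun p => by
    rw [hx, ha, hy, ← mulVec_smul]
    congr 1
    ext i
    simp [he]
  refine ⟨fun p hp => ?_, hxp pstar⟩
  rw [hden] at hpstar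
  simp only [hprofit, hxp, mulVec_smul, dotProduct_smul, smul_dotProduct, smul_eq_mul]
  generalize e ⬝ᵥ y = S at *
  generalize y ⬝ᵥ (C *ᵥ y) = K at *
  have hSK : 0 < S + K := by linarith
  have hvertex : 2 * (S + K) * (abar - pstar) = S * abar := by
    rw [hpstar]
    field_simp
    ring
  have hpos : 0 < (S + K) * (p - pstar) ^ 2 :=
    mul_pos hSK (sq_pos_of_ne_zero (sub_ne_zero.mpr hp))
  -- Completing the square: the profit gap is `(S + K) (p - pstar)²`.
  linear_combination hpos + (p - pstar) * hvertex
end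

section
/- Let (Ω, μ) be a probability space, n ≥ 1, and let X : Ω → ℝ^{n×n} be a measurable matrix-valued map such that X(ω) is symmetric positive definite for μ-almost every ω, every entry of X is μ-integrable, and ω ↦ vᵀX(ω)⁻¹v is μ-integrable, where v ∈ ℝⁿ is a fixed nonzero vector. Let X̄ be the entrywise integral of X over Ω. Then X̄ is symmetric positive definite and ∫_Ω vᵀX(ω)⁻¹v dμ(ω) ≥ vᵀX̄⁻¹v. -/
/-!
The function `A ↦ vᵀA⁻¹v` on positive definite matrices is a supremum of affine functions of `A`:
completing the square gives `2 vᵀw - wᵀAw ≤ vᵀA⁻¹v` for every vector `w`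
(`two_mul_dotProduct_sub_le_dotProduct_inv_mulVec`). Since `wᵀX(ω)w` is linear in the entries
of `X(ω)`, its integral is `wᵀX̄w` (`integral_dotProduct_mulVec`). This shows that `X̄` is positive
definite, and integrating the affine bound with `w = X̄⁻¹v`, where the left-hand side at `X̄` equals
`vᵀX̄⁻¹v`, gives the inequality.
-/

open Matrix MeasureTheory

/-- The affine minorant of `A ↦ vᵀA⁻¹v` determined by `w`; the difference of the two sides is
`uᵀAu` with `u = w - A⁻¹v`. -/
lemma two_mul_dotProduct_sub_le_dotProduct_inv_mulVec {n : ℕ} {A : Matrix (Fin n) (Fin n) ℝ}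
    (hA : A.PosDef) (v w : Fin n → ℝ) :
    2 * (v ⬝ᵥ w) - w ⬝ᵥ (A *ᵥ w) ≤ v ⬝ᵥ (A⁻¹ *ᵥ v) := by
  have hsq := hA.posSemidef.dotProduct_mulVec_nonneg (w - A⁻¹ *ᵥ v)
  have hdet : IsUnit A.det := (Matrix.isUnit_iff_isUnit_det A).mp hA.isUnit
  have hcancel : A *ᵥ (A⁻¹ *ᵥ v) = v := by
    rw [mulVec_mulVec, mul_nonsing_inv _ hdet, one_mulVec]
  have hT : Aᵀ = A := by simpa using hA.isHermitian.eq
  have hcross : (A⁻¹ *ᵥ v) ⬝ᵥ (A *ᵥ w) = v ⬝ᵥ w := by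
    rw [dotProduct_mulVec, ← mulVec_transpose, hT, hcancel]
  rw [star_trivial, mulVec_sub, hcancel, sub_dotProduct, dotProduct_sub, dotProduct_sub, hcross,
    dotProduct_comm w v, dotProduct_comm (A⁻¹ *ᵥ v) v] at hsq
  linarith

lemma dotProduct_mulVec_eq_sum {n : ℕ} (A : Matrix (Fin n) (Fin n) ℝ) (w : Fin n → ℝ) :
    w ⬝ᵥ (A *ᵥ w) = ∑ i, ∑ j, w i * (A i j * w j) := by
  simp only [dotProduct, mulVec, Finset.mul_sum]

lemma integrable_dotProduct_mulVec {Ω : Type*} [MeasurableSpace Ω] {μ : Measure Ω} {n : ℕ}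
    {X : Ω → Matrix (Fin n) (Fin n) ℝ} (hXint : ∀ i j, Integrable (fun ω => X ω i j) μ)
    (w : Fin n → ℝ) : Integrable (fun ω => w ⬝ᵥ (X ω *ᵥ w)) μ := by
  simp only [dotProduct_mulVec_eq_sum]
  exact integrable_finsetSum _ fun i _ => integrable_finsetSum _ fun j _ =>
    ((hXint i j).mul_const _).const_mul _

lemma integral_dotProduct_mulVec {Ω : Type*} [MeasurableSpace Ω] {μ : Measure Ω} {n : ℕ}
    {X : Ω → Matrix (Fin n) (Fin n) ℝ} (hXint : ∀ i j, Integrable (fun ω => X ω i j) μ)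
    {Xbar : Matrix (Fin n) (Fin n) ℝ} (hXbar : ∀ i j, Xbar i j = ∫ ω, X ω i j ∂μ)
    (w : Fin n → ℝ) : ∫ ω, w ⬝ᵥ (X ω *ᵥ w) ∂μ = w ⬝ᵥ (Xbar *ᵥ w) := by
  have hterm : ∀ i j, Integrable (fun ω => w i * (X ω i j * w j)) μ := fun i j =>
    ((hXint i j).mul_const _).const_mul _
  simp only [dotProduct_mulVec_eq_sum]
  rw [integral_finsetSum _ fun i _ => integrable_finsetSum _ fun j _ => hterm i j]
  refine Finset.sum_congr rfl fun i _ => ?_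
  rw [integral_finsetSum _ fun j _ => hterm i j]
  refine Finset.sum_congr rfl fun j _ => ?_
  rw [integral_const_mul, integral_mul_const, hXbar]

/-- The entrywise mean is positive definite: an almost everywhere strictly positive function
has strictly positive integral against a probability measure. -/
lemma posDef_of_entrywise_integral {Ω : Type*} [MeasurableSpace Ω] {μ : Measure Ω}
    [IsProbabilityMeasure μ] {n : ℕ} {X : Ω → Matrix (Fin n) (Fin n) ℝ}
    (hXpd : ∀ᵐ ω ∂μ, (X ω).PosDef) (hXint : ∀ i j, Integrable (fun ω => X ω i j) μ)
    {Xbar : Matrix (Fin n) (Fin n) ℝ} (hXbar : ∀ i j, Xbar i j = ∫ ω, X ω i j ∂μ) :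
    Xbar.PosDef := by
  refine PosDef.of_dotProduct_mulVec_pos ?_ fun w hw => ?_
  · ext i j
    rw [conjTranspose_apply, star_trivial, hXbar, hXbar]
    refine integral_congr_ae ?_
    filter_upwards [hXpd] with ω hω
    simpa using hω.isHermitian.apply i j
  · have hpos : ∀ᵐ ω ∂μ, 0 < w ⬝ᵥ (X ω *ᵥ w) := by
      filter_upwards [hXpd] with ω hω
      simpa using hω.dotProduct_mulVec_pos hw
    have hnonneg : 0 ≤ᵐ[μ] fun ω => w ⬝ᵥ (X ω *ᵥ w) := hpos.mono fun ω hω => hω.le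
    rw [star_trivial, ← integral_dotProduct_mulVec hXint hXbar w]
    refine lt_of_le_of_ne (integral_nonneg_of_ae hnonneg) fun h0 => ?_
    -- A zero integral would force the integrand to vanish almost everywhere.
    have hzero := (integral_eq_zero_iff_of_nonneg_ae hnonneg
      (integrable_dotProduct_mulVec hXint w)).mp h0.symm
    obtain ⟨ω, h1, h2⟩ := (hpos.and hzero).exists
    exact h1.ne' h2

/-- Jensen-type inequality for the inverse quadratic form of a
random positive definite matrix: if `X(ω)` is a.e. symmetric positive definite
with integrable entries and `ω ↦ vᵀX(ω)⁻¹v` integrable for a fixed `v ≠ 0`,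
then the entrywise expectation `X̄` is positive definite and
`∫ vᵀX(ω)⁻¹v dμ ≥ vᵀX̄⁻¹v`. -/
theorem jensen_inverse_quadratic_form
    {Ω : Type*} [MeasurableSpace Ω] (μ : Measure Ω) [IsProbabilityMeasure μ]
    (n : ℕ) (hn : 1 ≤ n)
    (X : Ω → Matrix (Fin n) (Fin n) ℝ) (hXmeas : ∀ i j, Measurable (fun ω => X ω i j))
    (hXpd : ∀ᵐ ω ∂μ, (X ω).PosDef)
    (hXint : ∀ i j, Integrable (fun ω => X ω i j) μ)
    (v : Fin n → ℝ) (hv : v ≠ 0)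
    (hquadint : Integrable (fun ω => v ⬝ᵥ ((X ω)⁻¹ *ᵥ v)) μ)
    (Xbar : Matrix (Fin n) (Fin n) ℝ)
    (hXbar : ∀ i j, Xbar i j = ∫ ω, X ω i j ∂μ) :
    Xbar.PosDef ∧ v ⬝ᵥ (Xbar⁻¹ *ᵥ v) ≤ ∫ ω, v ⬝ᵥ ((X ω)⁻¹ *ᵥ v) ∂μ := by
  have hpd : Xbar.PosDef := posDef_of_entrywise_integral hXpd hXint hXbar
  refine ⟨hpd, ?_⟩
  set w := Xbar⁻¹ *ᵥ v with hw
  have hdet : IsUnit Xbar.det := (Matrix.isUnit_iff_isUnit_det Xbar).mp hpd.isUnit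
  have hcancel : Xbar *ᵥ w = v := by
    rw [hw, mulVec_mulVec, mul_nonsing_inv _ hdet, one_mulVec]
  have hint := integrable_dotProduct_mulVec hXint w
  calc v ⬝ᵥ w = ∫ ω, (2 * (v ⬝ᵥ w) - w ⬝ᵥ (X ω *ᵥ w)) ∂μ := by
        rw [integral_sub (integrable_const _) hint, integral_dotProduct_mulVec hXint hXbar,
          hcancel, dotProduct_comm w v, integral_const, probReal_univ, one_smul]
        ring
    _ ≤ ∫ ω, v ⬝ᵥ ((X ω)⁻¹ *ᵥ v) ∂μ := by
        refine integral_mono_ae ((integrable_const _).sub hint) hquadint ?_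
        filter_upwards [hXpd] with ω hω
        exact two_mul_dotProduct_sub_le_dotProduct_inv_mulVec hω v w
end

section
/- Let n ≥ 1, let W be an n×n real matrix with zero diagonal, nonnegative entries, and each row summing to 1, and let a > p, b > 0, γ ≥ 0 be reals. Then the Nash-equilibrium consumption with identical users, x*(γ) = (2(b+γ)I - γW)⁻¹((a-p)·1), equals ((a-p)/(2b+γ))·1, and each of its components is strictly decreasing as a function of γ on [0, ∞), independently of the network topology W. -/
/-!
The matrix `2(b+γ)I - γW` is strictly diagonally dominant by rows: its diagonal entries are
`2(b+γ)`, while the off-diagonal entries of a row have absolute values summing to `γ`. Hence it is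
invertible (`det_consumption_ne_zero`). Since `W` fixes the all-ones vector, the matrix scales that
vector by `2(b+γ) - γ = 2b+γ`, so its inverse scales it by `1/(2b+γ)`. The resulting closed form
`(a-p)/(2b+γ)` is visibly strictly decreasing in `γ`.
-/

open Matrix

lemma det_consumption_ne_zero {n : ℕ} (W : Matrix (Fin n) (Fin n) ℝ)
    (hWdiag : ∀ i, W i i = 0) (hWnonneg : ∀ i j, 0 ≤ W i j) (hWrow : ∀ i, ∑ j, W i j = 1)
    {b γ : ℝ} (hb : 0 < b) (hγ : 0 ≤ γ) :
    ((2 * (b + γ)) • (1 : Matrix (Fin n) (Fin n) ℝ) - γ • W).det ≠ 0 := by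
  apply det_ne_zero_of_sum_row_lt_diag
  intro i
  have hoff : ∑ j ∈ Finset.univ.erase i,
      ‖((2 * (b + γ)) • (1 : Matrix (Fin n) (Fin n) ℝ) - γ • W) i j‖
        = ∑ j ∈ Finset.univ.erase i, γ * W i j := by
    refine Finset.sum_congr rfl fun j hj => ?_
    have hij : i ≠ j := (Finset.ne_of_mem_erase hj).symm
    simp [Matrix.one_apply_ne hij, abs_of_nonneg hγ, abs_of_nonneg (hWnonneg i j)]
  have hrow : ∑ j ∈ Finset.univ.erase i, W i j = 1 := by
    rw [Finset.sum_erase _ (hWdiag i), hWrow]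
  have hdiag : ((2 * (b + γ)) • (1 : Matrix (Fin n) (Fin n) ℝ) - γ • W) i i = 2 * (b + γ) := by
    simp [hWdiag]
  rw [hoff, ← Finset.mul_sum, hrow, hdiag, Real.norm_of_nonneg (by positivity)]
  linarith

/-- With identical users (`aᵢ = a`, `bᵢ = b`, `γᵢ = γ`, price `p`),
the Nash-equilibrium consumption `x*(γ) = (2(b+γ)I - γW)⁻¹((a-p)·1)` equals
`((a-p)/(2b+γ))·1` for every `γ ≥ 0`, and each component is strictly
decreasing in `γ` on `[0, ∞)`, independently of the topology `W`. -/
theorem identical_users_consumption_decreasing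
    (n : ℕ) (hn : 1 ≤ n)
    (W : Matrix (Fin n) (Fin n) ℝ)
    (hWdiag : ∀ i, W i i = 0)
    (hWnonneg : ∀ i j, 0 ≤ W i j)
    (hWrow : ∀ i, ∑ j, W i j = 1)
    (a p b : ℝ) (hap : p < a) (hb : 0 < b)
    (x : ℝ → (Fin n → ℝ))
    (hx : ∀ γ : ℝ, x γ =
      ((2 * (b + γ)) • (1 : Matrix (Fin n) (Fin n) ℝ) - γ • W)⁻¹ *ᵥ fun _ => a - p) :
    (∀ γ ≥ (0 : ℝ), x γ = fun _ => (a - p) / (2 * b + γ)) ∧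
      ∀ i, StrictAntiOn (fun γ => x γ i) (Set.Ici (0 : ℝ)) := by
  have hform : ∀ γ ≥ (0 : ℝ), x γ = fun _ => (a - p) / (2 * b + γ) := by
    intro γ hγ
    have hpos : 0 < 2 * b + γ := by linarith [show (0 : ℝ) ≤ γ from hγ]
    have hdet := det_consumption_ne_zero W hWdiag hWnonneg hWrow hb hγ
    rw [hx]
    set M := (2 * (b + γ)) • (1 : Matrix (Fin n) (Fin n) ℝ) - γ • W with hM
    have hWones : W *ᵥ (fun _ => (a - p) / (2 * b + γ)) = fun _ => (a - p) / (2 * b + γ) := by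
      ext i
      simp only [mulVec, dotProduct]
      rw [← Finset.sum_mul, hWrow, one_mul]
    have hsolve : M *ᵥ (fun _ => (a - p) / (2 * b + γ)) = fun _ => a - p := by
      rw [hM, sub_mulVec, smul_mulVec, smul_mulVec, one_mulVec, hWones]
      ext i
      simp only [Pi.sub_apply, Pi.smul_apply, smul_eq_mul]
      field_simp
      ring
    rw [← hsolve, mulVec_mulVec, nonsing_inv_mul _ (isUnit_iff_ne_zero.mpr hdet), one_mulVec]
  refine ⟨hform, fun i γ hγ δ hδ hlt => ?_⟩
  have hγ' : 0 ≤ γ := hγ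
  simp only [hform γ hγ, hform δ hδ]
  exact div_lt_div_of_pos_left (sub_pos.mpr hap) (by linarith) (by linarith)
end

section
/- Let n ≥ 2 and fix an index j. Let W be the n×n matrix with w_ik = 1/(n-1) for i ≠ k and w_ii = 0 (fully connected network with equal weights). Let b > 0, α > 0, ᾱ > n·α, and let v ∈ ℝⁿ be defined by v_i = α for i ≠ j and v_j = ᾱ. Define x(γ) = (2(b+γ)I - γW)⁻¹v for γ near 0. Then for every i ≠ j the derivative of the component x_i(γ) at γ = 0 is strictly positive, while the derivative of x_j(γ) at γ = 0 is strictly negative; i.e., the single high consumer j reduces its consumption while all its neighbors increase theirs for small peer-effect strength γ. -/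
open Matrix

/-!
Write `M(γ) = 2(b + γ)I - γW`. Then `M(0) = 2b I` and `M' = 2I - W`, so differentiating the inverse
gives `x'(0) = -M(0)⁻¹ M' M(0)⁻¹ v = (W v - 2 v) / (4 b²)`. For the fully connected network,
`(W v)_i` is the average of `v` over the other users. For `i ≠ j` this is
`((n - 2) α + ᾱ) / (n - 1)`, which exceeds `2 α` exactly when `ᾱ > n α`; for `i = j` it is `α`,
which is less than `2 ᾱ`.
-/

section

-- Any complete submultiplicative norm works; one is needed to differentiate `Ring.inverse`.
attribute [local instance] Matrix.linftyOpNormedRing Matrix.linftyOpNormedAlgebra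

/-- The first-order response of the equilibrium consumption to the peer-effect strength, for an
arbitrary interaction matrix `W`. -/
lemma hasDerivAt_consumption {n : ℕ} (W : Matrix (Fin n) (Fin n) ℝ) {b : ℝ} (hb : b ≠ 0)
    (v : Fin n → ℝ) (i : Fin n) :
    HasDerivAt (fun γ : ℝ =>
      (((2 * (b + γ)) • (1 : Matrix (Fin n) (Fin n) ℝ) - γ • W)⁻¹ *ᵥ v) i)
      (((W *ᵥ v) i - 2 * v i) / (4 * b ^ 2)) 0 := by
  have hc : (2 * b) ≠ 0 := mul_ne_zero two_ne_zero hb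
  let u : (Matrix (Fin n) (Fin n) ℝ)ˣ :=
    ⟨(2 * b) • 1, (2 * b)⁻¹ • 1, by
      rw [smul_mul_smul_comm, mul_inv_cancel₀ hc, one_mul, one_smul], by
      rw [smul_mul_smul_comm, inv_mul_cancel₀ hc, one_mul, one_smul]⟩
  have hM : HasDerivAt (fun γ : ℝ => (2 * (b + γ)) • (1 : Matrix (Fin n) (Fin n) ℝ) - γ • W)
      ((2 : ℝ) • 1 - W) 0 := by
    have h1 : HasDerivAt (fun γ : ℝ => 2 * (b + γ)) 2 0 := by
      simpa using ((hasDerivAt_id (0 : ℝ)).const_add b).const_mul 2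
    have h2 := (h1.smul_const (1 : Matrix (Fin n) (Fin n) ℝ)).sub
      ((hasDerivAt_id (0 : ℝ)).smul_const W)
    rw [one_smul] at h2
    exact h2
  have hu : (u : Matrix (Fin n) (Fin n) ℝ) =
      (2 * (b + (0 : ℝ))) • (1 : Matrix (Fin n) (Fin n) ℝ) - (0 : ℝ) • W := by simp [u]
  have hinv := (hasFDerivAt_ringInverse (𝕜 := ℝ) u)
  rw [hu] at hinv
  have hcomp := hinv.comp_hasDerivAt (0 : ℝ) hM
  let L : Matrix (Fin n) (Fin n) ℝ →ₗ[ℝ] ℝ :=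
    { toFun := fun A => (A *ᵥ v) i
      map_add' := fun A B => by simp [Matrix.add_mulVec]
      map_smul' := fun c A => by simp [Matrix.smul_mulVec] }
  have hL := (LinearMap.toContinuousLinearMap L).hasFDerivAt.comp_hasDerivAt (0 : ℝ) hcomp
  refine (hL.congr_of_eventuallyEq (Filter.Eventually.of_forall fun γ => ?_)).congr_deriv ?_
  · exact congrArg (fun A : Matrix (Fin n) (Fin n) ℝ => (A *ᵥ v) i)
      (Matrix.nonsing_inv_eq_ringInverse _)
  · change ((-(((2 * b)⁻¹ • (1 : Matrix (Fin n) (Fin n) ℝ)) * ((2 : ℝ) • 1 - W) *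
      ((2 * b)⁻¹ • 1))) *ᵥ v) i = _
    simp only [smul_mul_assoc, mul_smul_comm, one_mul, mul_one, Matrix.neg_mulVec,
      Matrix.smul_mulVec, Matrix.sub_mulVec, Matrix.one_mulVec, Pi.neg_apply, Pi.smul_apply,
      Pi.sub_apply, smul_eq_mul]
    field_simp
    ring

end

/-- Influence of a high consumer, fully connected network:
with `w_ik = 1/(n-1)` for `i ≠ k`, a single high consumer `j` with net
intercept `ᾱ > n·α` (all others having intercept `α > 0`) causes, for small
peer-effect strength, an increase of every neighbor's consumption
(`d x_i/dγ|₀ > 0` for `i ≠ j`) while decreasing its own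
(`d x_j/dγ|₀ < 0`). -/
theorem high_consumer_influence_fully_connected
    (n : ℕ) (hn : 2 ≤ n) (j : Fin n)
    (W : Matrix (Fin n) (Fin n) ℝ)
    (hW : ∀ i k, W i k = if i = k then 0 else 1 / ((n : ℝ) - 1))
    (b α αbar : ℝ) (hb : 0 < b) (hα : 0 < α) (hαbar : (n : ℝ) * α < αbar)
    (v : Fin n → ℝ) (hv : ∀ i, v i = if i = j then αbar else α)
    (x : ℝ → (Fin n → ℝ))
    (hx : ∀ γ : ℝ, x γ =
      ((2 * (b + γ)) • (1 : Matrix (Fin n) (Fin n) ℝ) - γ • W)⁻¹ *ᵥ v) :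
    (∀ i, i ≠ j → 0 < deriv (fun γ => x γ i) 0) ∧
      deriv (fun γ => x γ j) 0 < 0 := by
  have hn' : (0 : ℝ) < (n : ℝ) - 1 := by
    have : (2 : ℝ) ≤ n := by exact_mod_cast hn
    linarith
  have hderiv : ∀ i, deriv (fun γ => x γ i) 0 = ((W *ᵥ v) i - 2 * v i) / (4 * b ^ 2) := by
    intro i
    simp only [hx]
    exact (hasDerivAt_consumption W hb.ne' v i).deriv
  have hsum : ∑ k, v k = ((n : ℝ) - 1) * α + αbar := by
    have h : ∀ k, v k = α + if k = j then αbar - α else 0 := by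
      intro k
      rw [hv]
      split_ifs <;> ring
    simp only [h, Finset.sum_add_distrib, Finset.sum_ite_eq', Finset.mem_univ, if_true]
    simp
    ring
  have hWv : ∀ i, (W *ᵥ v) i = (((n : ℝ) - 1) * α + αbar - v i) / ((n : ℝ) - 1) := by
    intro i
    have h : ∀ k, W i k * v k =
        (1 / ((n : ℝ) - 1)) * v k - if i = k then (1 / ((n : ℝ) - 1)) * v k else 0 := by
      intro k
      rw [hW]
      split_ifs <;> ring
    simp only [Matrix.mulVec, dotProduct, h, Finset.sum_sub_distrib, ← Finset.mul_sum, hsum,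
      Finset.sum_ite_eq, Finset.mem_univ, if_true]
    ring
  have hb4 : 0 < 4 * b ^ 2 := by positivity
  constructor
  · intro i hi
    rw [hderiv, hWv, hv, if_neg hi]
    apply div_pos _ hb4
    rw [sub_pos, lt_div_iff₀ hn']
    linarith
  · rw [hderiv, hWv, hv, if_pos rfl]
    apply div_neg_of_neg_of_pos _ hb4
    rw [sub_neg, div_lt_iff₀ hn']
    -- Cancelling `ᾱ` and `n - 1 > 0`, what remains is `α < 2 ᾱ`.
    have h1 : α < 2 * αbar := by nlinarith
    nlinarith [mul_lt_mul_of_pos_right h1 hn']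
end

section
/- Let n ≥ 2, and let N be a symmetric irreflexive adjacency relation on {1,…,n} with every user having at least one neighbor; write m_i ≥ 1 for the number of neighbors of user i. Let W be the n×n matrix with w_ik = 1/m_i if k is a neighbor of i and w_ik = 0 otherwise. Fix j, let b > 0, α > 0, k > 1/2, and let v ∈ ℝⁿ with v_j = k·α and v_i = α for i ≠ j. Define x(γ) = (2(b+γ)I - γW)⁻¹v for γ near 0. Then for every user i that is a neighbor of j, the derivative of x_i(γ) at γ = 0 equals α(k - m_i - 1)/(4b²m_i); in particular it is strictly positive if and only if m_i < k - 1. Moreover, the derivative of x_j(γ) at γ = 0 equals -α(2k - 1)/(4b²) < 0. -/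
/-!
The system matrix is the affine pencil `2b I + γ (2I - W)`. For an affine pencil with `P` invertible,
`(P + γ B)⁻¹ - P⁻¹ = -γ (P + γ B)⁻¹ B P⁻¹` for small `γ`, so continuity of the inverse gives the
derivative `-P⁻¹ B P⁻¹` at `γ = 0`. With `P = 2b I` this yields
`x'(0) = (W v - 2 v) / (4 b²)`. Row `i` of `W v` is the average of `v` over the neighbors of `i`:
it equals `α + (k - 1) α / m_i` if `j` is one of them, and `α` for `i = j`.
-/

open Matrix
open Filter Topology

/-- Derivative at `0` of the solution of the linear system with matrix `P + γ B`. -/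
lemma hasDerivAt_inv_pencil_mulVec {ι : Type*} [Fintype ι] [DecidableEq ι]
    (P B : Matrix ι ι ℝ) (hP : P.det ≠ 0) (v : ι → ℝ) (i : ι) :
    HasDerivAt (fun γ : ℝ => ((P + γ • B)⁻¹ *ᵥ v) i) (-((P⁻¹ * B * P⁻¹) *ᵥ v) i) 0 := by
  have hA : Continuous fun γ : ℝ => P + γ • B := by fun_prop
  have hdet : Continuous fun γ : ℝ => (P + γ • B).det := hA.matrix_det
  have hne : ∀ᶠ γ : ℝ in 𝓝 0, (P + γ • B).det ≠ 0 :=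
    hdet.continuousAt.eventually_ne (by simpa using hP)
  have hinv : ContinuousAt (fun γ : ℝ => (P + γ • B)⁻¹) 0 := by
    simp only [Matrix.inv_def, Ring.inverse_eq_inv']
    exact (hdet.continuousAt.inv₀ (by simpa using hP)).smul hA.matrix_adjugate.continuousAt
  have hcont : ContinuousAt (fun γ : ℝ => -(((P + γ • B)⁻¹ * B * P⁻¹) *ᵥ v) i) 0 := by
    have hcts : Continuous fun Q : Matrix ι ι ℝ => -((Q * B * P⁻¹) *ᵥ v) i :=
      ((continuous_apply i).comp
        (Continuous.matrix_mulVec (by fun_prop) continuous_const)).neg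
    exact ContinuousAt.comp (f := fun γ : ℝ => (P + γ • B)⁻¹) hcts.continuousAt hinv
  rw [hasDerivAt_iff_tendsto_slope]
  have hlim := hcont.tendsto.mono_left (nhdsWithin_le_nhds (s := {(0 : ℝ)}ᶜ))
  simp only [zero_smul, add_zero] at hlim
  refine hlim.congr' ?_
  filter_upwards [nhdsWithin_le_nhds hne, self_mem_nhdsWithin] with γ hγ hγ0
  have hγ0' : γ ≠ 0 := hγ0
  have hres : (P + γ • B)⁻¹ = P⁻¹ - γ • ((P + γ • B)⁻¹ * B * P⁻¹) := by
    have h1 : (P + γ • B)⁻¹ * (P + γ • B) = 1 :=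
      Matrix.nonsing_inv_mul _ (isUnit_iff_ne_zero.mpr hγ)
    have h2 : P * P⁻¹ = 1 := Matrix.mul_nonsing_inv _ (isUnit_iff_ne_zero.mpr hP)
    calc (P + γ • B)⁻¹ = (P + γ • B)⁻¹ * (P * P⁻¹) := by rw [h2, mul_one]
      _ = (P + γ • B)⁻¹ * (P + γ • B) * P⁻¹ - γ • ((P + γ • B)⁻¹ * B * P⁻¹) := by
        simp only [mul_add, add_mul, Matrix.mul_smul, Matrix.smul_mul, mul_assoc]
        abel
      _ = _ := by rw [h1, one_mul]
  have hval : ((P + γ • B)⁻¹ *ᵥ v) i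
      = (P⁻¹ *ᵥ v) i - γ * (((P + γ • B)⁻¹ * B * P⁻¹) *ᵥ v) i := by
    conv_lhs => rw [hres]
    simp [Matrix.sub_mulVec, Matrix.smul_mulVec]
  rw [slope_def_field, hval]
  simp only [zero_smul, add_zero, sub_zero]
  field_simp
  ring

/-- Boomerang effect, general network with equal weights: with
`w_ik = 1/m_i` for neighbors `k` of `i`, a single high consumer `j` with net
intercept `k·α` (`k > 1/2`, all others having intercept `α > 0`):
every neighbor `i` of `j` has `d x_i/dγ|₀ = α(k - m_i - 1)/(4b²m_i)`, which is
strictly positive iff `m_i < k - 1`, while `d x_j/dγ|₀ = -α(2k-1)/(4b²) < 0`. -/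
theorem boomerang_effect_equal_weights
    (n : ℕ) (hn : 2 ≤ n)
    (N : Fin n → Fin n → Prop) [DecidableRel N]
    (hsymm : ∀ i l, N i l → N l i)
    (hirrefl : ∀ i, ¬ N i i)
    (m : Fin n → ℕ)
    (hm : ∀ i, m i = (Finset.univ.filter (fun l => N i l)).card)
    (hdeg : ∀ i, 1 ≤ m i)
    (j : Fin n)
    (W : Matrix (Fin n) (Fin n) ℝ)
    (hW : ∀ i l, W i l = if N i l then 1 / (m i : ℝ) else 0)
    (b α k : ℝ) (hb : 0 < b) (hα : 0 < α) (hk : 1 / 2 < k)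
    (v : Fin n → ℝ) (hv : ∀ i, v i = if i = j then k * α else α)
    (x : ℝ → (Fin n → ℝ))
    (hx : ∀ γ : ℝ, x γ =
      ((2 * (b + γ)) • (1 : Matrix (Fin n) (Fin n) ℝ) - γ • W)⁻¹ *ᵥ v) :
    (∀ i, N j i →
        deriv (fun γ => x γ i) 0 = α * (k - (m i : ℝ) - 1) / (4 * b ^ 2 * (m i : ℝ)) ∧
        (0 < deriv (fun γ => x γ i) 0 ↔ (m i : ℝ) < k - 1)) ∧
      deriv (fun γ => x γ j) 0 = -(α * (2 * k - 1)) / (4 * b ^ 2) ∧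
      deriv (fun γ => x γ j) 0 < 0 := by
  have hmpos : ∀ i, (m i : ℝ) ≠ 0 := fun i => by
    have := hdeg i
    positivity
  have hb0 : b ≠ 0 := hb.ne'
  have hder : ∀ i, deriv (fun γ => x γ i) 0 = ((W *ᵥ v) i - 2 * v i) / (4 * b ^ 2) := by
    intro i
    have hdet : ((2 * b) • (1 : Matrix (Fin n) (Fin n) ℝ)).det ≠ 0 := by
      simp [hb0]
    have hinv : ((2 * b) • (1 : Matrix (Fin n) (Fin n) ℝ))⁻¹ = (2 * b)⁻¹ • 1 := by
      apply Matrix.inv_eq_left_inv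
      rw [Matrix.smul_mul, one_mul, smul_smul, inv_mul_cancel₀ (by positivity), one_smul]
    have h := (hasDerivAt_inv_pencil_mulVec ((2 * b) • 1)
      ((2 : ℝ) • (1 : Matrix (Fin n) (Fin n) ℝ) - W) hdet v i).deriv
    have hfun : (fun γ => x γ i) = fun γ : ℝ => (((2 * b) • (1 : Matrix (Fin n) (Fin n) ℝ)
        + γ • ((2 : ℝ) • (1 : Matrix (Fin n) (Fin n) ℝ) - W))⁻¹ *ᵥ v) i := by
      funext γ
      rw [hx]
      congr 3
      module
    rw [hfun, h, hinv]
    simp only [Matrix.smul_mul, Matrix.mul_smul, one_mul, mul_one, Matrix.smul_mulVec,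
      Matrix.sub_mulVec, Matrix.one_mulVec, Pi.smul_apply, Pi.sub_apply, smul_eq_mul]
    field_simp
    ring
  -- Writing `v = α + (k - 1) α e_j`, the constant part averages to `α`.
  have hWv : ∀ i, (W *ᵥ v) i = α + if N i j then (k - 1) * α / m i else 0 := by
    intro i
    have hterm : ∀ l, W i l * v l = (if N i l then α / (m i : ℝ) else 0)
        + if l = j then (if N i j then (k - 1) * α / m i else 0) else 0 := by
      intro l
      rw [hW, hv]
      by_cases hl : l = j
      · subst hl
        by_cases hN : N i l
        · simp only [hN, if_true]
          ring
        · simp [hN]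
      · by_cases hN : N i l
        · simp only [hN, hl, if_true, if_false]
          ring
        · simp [hN, hl]
    have hsum : ∑ l, (if N i l then α / (m i : ℝ) else 0) = α := by
      rw [← Finset.sum_filter, Finset.sum_const, ← hm, nsmul_eq_mul]
      exact mul_div_cancel₀ _ (hmpos i)
    simp only [Matrix.mulVec, dotProduct, hterm, Finset.sum_add_distrib, hsum,
      Finset.sum_ite_eq', Finset.mem_univ, if_true]
  have hj : deriv (fun γ => x γ j) 0 = -(α * (2 * k - 1)) / (4 * b ^ 2) := by
    rw [hder, hWv, hv, if_neg (hirrefl j), if_pos rfl]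
    ring
  refine ⟨fun i hi => ?_, hj, ?_⟩
  · have hij : i ≠ j := fun h => hirrefl j (h ▸ hi)
    have hmi : (0 : ℝ) < m i := by exact_mod_cast hdeg i
    have hi' : deriv (fun γ => x γ i) 0
        = α * (k - (m i : ℝ) - 1) / (4 * b ^ 2 * (m i : ℝ)) := by
      rw [hder, hWv, hv, if_pos (hsymm _ _ hi), if_neg hij]
      have := hmpos i
      field_simp
      ring
    refine ⟨hi', ?_⟩
    rw [hi', div_pos_iff_of_pos_right (by positivity), mul_pos_iff_of_pos_left hα]
    constructor <;> intro h <;> linarith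
  · rw [hj]
    have : 0 < α * (2 * k - 1) := mul_pos hα (by linarith)
    exact div_neg_of_neg_of_pos (by linarith) (by positivity)
end

section
/- Let n ≥ 2, let p ∈ ℝ, a_i > p and b_i > 0 for all i, γ ≥ 0, and let w_{12}, w_{21} ∈ [0,1] and w_{1j}, w_{2j} ≥ 0 for j = 3,…,n. Set x_j = (a_j - p)/(2b_j) for j ≥ 3, S_1 = Σ_{j≥3} w_{1j}x_j, S_2 = Σ_{j≥3} w_{2j}x_j, and let (x_1*, x_2*) be the unique solution of the system 2(b_1+γ)x_1 - γw_{12}x_2 = a_1 - p + γS_1 and -γw_{21}x_1 + 2(b_2+γ)x_2 = a_2 - p + γS_2 (the determinant 4(b_1+γ)(b_2+γ) - γ²w_{12}w_{21} is positive). If b_1 ≤ (a_1-p)[4(b_2+γ) - γw_{12}w_{21}] / [4(b_2+γ)S_1 + 2w_{12}(a_2 - p + γS_2)] and b_2 ≤ (a_2-p)[4(b_1+γ) - γw_{12}w_{21}] / [4(b_1+γ)S_2 + 2w_{21}(a_1 - p + γS_1)], then x_1* + x_2* ≤ (a_1-p)/(2b_1) + (a_2-p)/(2b_2). -/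
/-!
The bound holds user by user. Cramer's rule gives `D * x₁` explicitly, where `D` is the
determinant of the system, and `D * ((a₁ - p) - 2 * b₁ * x₁)` is then `γ` times the difference of
the two sides of the condition on `b₁` after clearing its denominator, so it is nonnegative.
This is `le_isolated_consumption`; swapping the two users gives the bound on `x₂`.
-/

lemma peer_det_pos {b c γ w v : ℝ} (hb : 0 < b) (hc : 0 < c) (hγ : 0 ≤ γ)
    (hw : w ∈ Set.Icc (0 : ℝ) 1) (hv : v ∈ Set.Icc (0 : ℝ) 1) :
    0 < 4 * (b + γ) * (c + γ) - γ ^ 2 * w * v := by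
  have hwv : w * v ≤ 1 := mul_le_one₀ hw.2 hv.1 hv.2
  have h1 : γ ^ 2 * (w * v) ≤ γ ^ 2 * 1 := mul_le_mul_of_nonneg_left hwv (sq_nonneg γ)
  have h2 : 0 < b * c := mul_pos hb hc
  have h3 : 0 ≤ b * γ := mul_nonneg hb.le hγ
  have h4 : 0 ≤ c * γ := mul_nonneg hc.le hγ
  nlinarith [sq_nonneg γ]

/-- Equilibrium consumption `x` of a user with parameters `A = a - p`, `b`, facing a peer with
parameters `B`, `c` and consumption `y`, is at most its consumption `A / (2 * b)` without peer
effects. Here `S` and `T` are the weighted consumptions of the remaining users seen by the two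
users. -/
lemma le_isolated_consumption {A B b c γ w v S T x y : ℝ}
    (hb : 0 < b) (hc : 0 < c) (hγ : 0 ≤ γ) (hw : 0 ≤ w) (hS : 0 ≤ S) (hR : 0 ≤ B + γ * T)
    (hD : 0 < 4 * (b + γ) * (c + γ) - γ ^ 2 * w * v)
    (h1 : 2 * (b + γ) * x - γ * w * y = A + γ * S)
    (h2 : -(γ * v) * x + 2 * (c + γ) * y = B + γ * T)
    (hcond : b ≤ A * (4 * (c + γ) - γ * w * v) /
      (4 * (c + γ) * S + 2 * w * (B + γ * T))) :
    x ≤ A / (2 * b) := by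
  have hden : 0 ≤ 4 * (c + γ) * S + 2 * w * (B + γ * T) := by positivity
  -- A zero denominator would make the quotient `0`, contradicting `0 < b`.
  have hpos : 0 < 4 * (c + γ) * S + 2 * w * (B + γ * T) := by
    refine lt_of_le_of_ne hden fun h => ?_
    rw [← h, div_zero] at hcond
    linarith
  rw [le_div_iff₀ hpos] at hcond
  have hmul := mul_le_mul_of_nonneg_left hcond hγ
  have cramer : (4 * (b + γ) * (c + γ) - γ ^ 2 * w * v) * x =
      2 * (c + γ) * (A + γ * S) + γ * w * (B + γ * T) := by
    linear_combination 2 * (c + γ) * h1 + γ * w * h2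
  rw [le_div_iff₀ (by positivity)]
  refine le_of_mul_le_mul_left ?_ hD
  linear_combination hmul + 2 * b * cramer

/-- Targeted peer effects: when only users 1 and 2 are exposed
to the peer effect (the other users `j` consuming `x_j = (a_j - p)/(2b_j)`),
the determinant of the resulting 2×2 best-response system is positive, and
under the stated bounds on `b₁` and `b₂` the sum of the equilibrium
consumptions of users 1 and 2 does not exceed their total consumption in
absence of peer effects. -/
theorem targeted_peer_effects_reduce_consumption
    {ι : Type*} [Fintype ι] (p : ℝ)
    (a1 a2 b1 b2 γ w12 w21 : ℝ)
    (aj bj w1 w2 : ι → ℝ)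
    (ha1 : p < a1) (ha2 : p < a2) (hb1 : 0 < b1) (hb2 : 0 < b2)
    (haj : ∀ j, p < aj j) (hbj : ∀ j, 0 < bj j)
    (hγ : 0 ≤ γ)
    (h12 : w12 ∈ Set.Icc (0 : ℝ) 1) (h21 : w21 ∈ Set.Icc (0 : ℝ) 1)
    (hw1 : ∀ j, 0 ≤ w1 j) (hw2 : ∀ j, 0 ≤ w2 j)
    (x : ι → ℝ) (hxj : ∀ j, x j = (aj j - p) / (2 * bj j))
    (S1 S2 : ℝ) (hS1 : S1 = ∑ j, w1 j * x j) (hS2 : S2 = ∑ j, w2 j * x j)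
    (x1 x2 : ℝ)
    (hsys1 : 2 * (b1 + γ) * x1 - γ * w12 * x2 = a1 - p + γ * S1)
    (hsys2 : -(γ * w21) * x1 + 2 * (b2 + γ) * x2 = a2 - p + γ * S2)
    (hcond1 : b1 ≤ (a1 - p) * (4 * (b2 + γ) - γ * w12 * w21) /
      (4 * (b2 + γ) * S1 + 2 * w12 * (a2 - p + γ * S2)))
    (hcond2 : b2 ≤ (a2 - p) * (4 * (b1 + γ) - γ * w12 * w21) /
      (4 * (b1 + γ) * S2 + 2 * w21 * (a1 - p + γ * S1))) :
    0 < 4 * (b1 + γ) * (b2 + γ) - γ ^ 2 * w12 * w21 ∧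
      x1 + x2 ≤ (a1 - p) / (2 * b1) + (a2 - p) / (2 * b2) := by
  have hx0 : ∀ j, 0 ≤ x j := fun j => by
    rw [hxj j]
    exact div_nonneg (sub_pos.2 (haj j)).le (mul_pos two_pos (hbj j)).le
  have hS1n : 0 ≤ S1 := hS1 ▸ Finset.sum_nonneg fun j _ => mul_nonneg (hw1 j) (hx0 j)
  have hS2n : 0 ≤ S2 := hS2 ▸ Finset.sum_nonneg fun j _ => mul_nonneg (hw2 j) (hx0 j)
  have hR1 : 0 ≤ a1 - p + γ * S1 := add_nonneg (sub_pos.2 ha1).le (mul_nonneg hγ hS1n)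
  have hR2 : 0 ≤ a2 - p + γ * S2 := add_nonneg (sub_pos.2 ha2).le (mul_nonneg hγ hS2n)
  refine ⟨peer_det_pos hb1 hb2 hγ h12 h21, add_le_add ?_ ?_⟩
  · exact le_isolated_consumption hb1 hb2 hγ h12.1 hS1n hR2
      (peer_det_pos hb1 hb2 hγ h12 h21) hsys1 hsys2 hcond1
  · refine le_isolated_consumption hb2 hb1 hγ h21.1 hS2n hR1
      (peer_det_pos hb2 hb1 hγ h21 h12) (y := x1) (v := w12) ?_ ?_ ?_
    · linear_combination hsys2
    · linear_combination hsys1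
    · rwa [mul_right_comm γ w21 w12]
end

section
/- Let a_1 > p, a_2 > p, b_1 > 0, b_2 > 0, γ ≥ 0, and let (x_1*, x_2*) be the unique solution of 2(b_1+γ)x_1 - γx_2 = a_1 - p and -γx_1 + 2(b_2+γ)x_2 = a_2 - p (the determinant 4(b_1+γ)(b_2+γ) - γ² is positive). If b_1 ≤ (a_1-p)(4b_2+3γ)/(2(a_2-p)) and b_2 ≤ (a_2-p)(4b_1+3γ)/(2(a_1-p)), then x_1* + x_2* ≤ (a_1-p)/(2b_1) + (a_2-p)/(2b_2). -/
/-!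
Write `A = a₁ - p`, `B = a₂ - p`, and let `D` be the determinant of the system. By Cramer's rule,
the reduction in total consumption caused by the peer effect is `γ * N / (2 * b₁ * b₂ * D)` with
`N = A b₂ (4b₂ + 3γ - 2b₁) + B b₁ (4b₁ + 3γ - 2b₂)`. The two conditions, cleared of denominators,
read `2 B b₁ ≤ A (4b₂ + 3γ)` and `2 A b₂ ≤ B (4b₁ + 3γ)`; adding `b₂` times the first to `b₁` times
the second gives `N ≥ 0`.
-/


/-- Targeted peer effects, two users: for two fully connected
users exposed to the peer effect, the determinant of the 2×2 best-response
system is positive, and if `b₁ ≤ (a₁-p)(4b₂+3γ)/(2(a₂-p))` and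
`b₂ ≤ (a₂-p)(4b₁+3γ)/(2(a₁-p))`, then the sum of their equilibrium
consumptions does not exceed their total consumption without peer effects. -/
theorem two_user_peer_effects_reduce_consumption
    (p a1 a2 b1 b2 γ : ℝ)
    (ha1 : p < a1) (ha2 : p < a2) (hb1 : 0 < b1) (hb2 : 0 < b2) (hγ : 0 ≤ γ)
    (x1 x2 : ℝ)
    (hsys1 : 2 * (b1 + γ) * x1 - γ * x2 = a1 - p)
    (hsys2 : -γ * x1 + 2 * (b2 + γ) * x2 = a2 - p)
    (hcond1 : b1 ≤ (a1 - p) * (4 * b2 + 3 * γ) / (2 * (a2 - p)))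
    (hcond2 : b2 ≤ (a2 - p) * (4 * b1 + 3 * γ) / (2 * (a1 - p))) :
    0 < 4 * (b1 + γ) * (b2 + γ) - γ ^ 2 ∧
      x1 + x2 ≤ (a1 - p) / (2 * b1) + (a2 - p) / (2 * b2) := by
  have hA : 0 < a1 - p := sub_pos.2 ha1
  have hB : 0 < a2 - p := sub_pos.2 ha2
  have hD : 0 < 4 * (b1 + γ) * (b2 + γ) - γ ^ 2 := by
    have h : 4 * (b1 + γ) * (b2 + γ) - γ ^ 2
        = 4 * (b1 * b2) + 4 * (b1 * γ) + 4 * (b2 * γ) + 3 * γ ^ 2 := by ring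
    rw [h]
    positivity
  refine ⟨hD, ?_⟩
  rw [le_div_iff₀ (by positivity)] at hcond1 hcond2
  generalize a1 - p = A at *
  generalize a2 - p = B at *
  -- Cramer's rule, summed over the two users.
  have hsum : x1 + x2 = (A * (2 * b2 + 3 * γ) + B * (2 * b1 + 3 * γ)) /
      (4 * (b1 + γ) * (b2 + γ) - γ ^ 2) := by
    rw [eq_div_iff hD.ne']
    linear_combination (2 * b2 + 3 * γ) * hsys1 + (2 * b1 + 3 * γ) * hsys2
  have hN : 0 ≤ A * b2 * (4 * b2 + 3 * γ - 2 * b1) + B * b1 * (4 * b1 + 3 * γ - 2 * b2) := by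
    linarith [mul_le_mul_of_nonneg_left hcond1 hb2.le, mul_le_mul_of_nonneg_left hcond2 hb1.le]
  have hdiff : A / (2 * b1) + B / (2 * b2) - (x1 + x2) =
      γ * (A * b2 * (4 * b2 + 3 * γ - 2 * b1) + B * b1 * (4 * b1 + 3 * γ - 2 * b2)) /
        (2 * b1 * b2 * (4 * (b1 + γ) * (b2 + γ) - γ ^ 2)) := by
    have hD' := hD.ne'
    rw [hsum]
    field_simp
    ring
  rw [← sub_nonneg, hdiff]
  positivity
end

section
/- Let n ≥ 1, let W be a symmetric n×n real matrix with zero diagonal, nonnegative entries, and each row summing to 1, let B = diag(2b_1,…,2b_n), C = diag(c_1,…,c_n) with b_i > 0, c_i ≥ 0, let γ ≥ 0, and let a ∈ ℝⁿ have all entries strictly positive. Then every component of the socially optimal consumption x° = (C + B/2 + γI - γW)⁻¹ (a/2) is strictly greater than the corresponding component of the equilibrium consumption under the profit-maximizing discriminatory prices, x* = (C + B + 2γI - γW)⁻¹ (a/2); i.e., the market equilibrium is inefficient with x_i* < x_i° for every user i. -/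
open Matrix

/-!
Both matrices have the form `diag d - γ W` with `W` nonnegative and row-stochastic and `d i > γ`.
Evaluating at an index where `y` is minimal, where `(W y) i ≥ y i`, shows that such a matrix obeys
a minimum principle: a nonnegative (positive) image forces a nonnegative (positive) vector. In
particular the matrix is invertible, so the inverses in the statement are genuine and
`x°`, `x*` solve their linear systems. Positivity of `a` gives `x* > 0`; subtracting the systems,
`x° - x*` is sent by the welfare matrix to the vector with entries `(b i + γ) * x* i > 0`,
whence `x° > x*`.
-/

section MinimumPrinciple

variable {n : ℕ} {W : Matrix (Fin n) (Fin n) ℝ} {γ : ℝ} {d : Fin n → ℝ}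

lemma diagonal_sub_smul_mulVec_apply (y : Fin n → ℝ) (i : Fin n) :
    ((diagonal d - γ • W) *ᵥ y) i = d i * y i - γ * ∑ j, W i j * y j := by
  rw [sub_mulVec, Pi.sub_apply, mulVec_diagonal, smul_mulVec]
  rfl

/-- Weak minimum principle for `diag d - γ W`. -/
lemma nonneg_of_mulVec_nonneg (hW : ∀ i j, 0 ≤ W i j) (hrow : ∀ i, ∑ j, W i j = 1)
    (hγ : 0 ≤ γ) (hd : ∀ i, γ < d i) {y : Fin n → ℝ}
    (h : ∀ i, 0 ≤ ((diagonal d - γ • W) *ᵥ y) i) (i : Fin n) : 0 ≤ y i := by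
  have : Nonempty (Fin n) := ⟨i⟩
  obtain ⟨m, hm⟩ := Finite.exists_min y
  refine le_trans ?_ (hm i)
  have hmin : y m ≤ ∑ j, W m j * y j :=
    calc y m = ∑ j, W m j * y m := by rw [← Finset.sum_mul, hrow, one_mul]
      _ ≤ _ := Finset.sum_le_sum fun j _ => mul_le_mul_of_nonneg_left (hm j) (hW m j)
  have hres := h m
  rw [diagonal_sub_smul_mulVec_apply] at hres
  have hle := mul_le_mul_of_nonneg_left hmin hγ
  exact nonneg_of_mul_nonneg_right (a := d m - γ) (by linarith) (sub_pos.2 (hd m))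

/-- Strict minimum principle for `diag d - γ W`. -/
lemma pos_of_mulVec_pos (hW : ∀ i j, 0 ≤ W i j) (hrow : ∀ i, ∑ j, W i j = 1)
    (hγ : 0 ≤ γ) (hd : ∀ i, γ < d i) {y : Fin n → ℝ}
    (h : ∀ i, 0 < ((diagonal d - γ • W) *ᵥ y) i) (i : Fin n) : 0 < y i := by
  have hy := nonneg_of_mulVec_nonneg hW hrow hγ hd fun i => (h i).le
  have hsum : 0 ≤ γ * ∑ j, W i j * y j :=
    mul_nonneg hγ (Finset.sum_nonneg fun j _ => mul_nonneg (hW i j) (hy j))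
  have hres := h i
  rw [diagonal_sub_smul_mulVec_apply] at hres
  exact pos_of_mul_pos_right (a := d i) (by linarith) (hγ.trans (hd i).le)

lemma isUnit_diagonal_sub_smul (hW : ∀ i j, 0 ≤ W i j) (hrow : ∀ i, ∑ j, W i j = 1)
    (hγ : 0 ≤ γ) (hd : ∀ i, γ < d i) : IsUnit (diagonal d - γ • W) := by
  rw [← mulVec_injective_iff_isUnit]
  -- The weak minimum principle bounds the difference of two preimages from both sides.
  have key : ∀ u v : Fin n → ℝ, (diagonal d - γ • W) *ᵥ u = (diagonal d - γ • W) *ᵥ v →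
      ∀ i, v i ≤ u i := fun u v huv i => sub_nonneg.1 <|
    nonneg_of_mulVec_nonneg (y := u - v) hW hrow hγ hd (fun i => by simp [mulVec_sub, huv]) i
  exact fun u v huv => funext fun i => le_antisymm (key v u huv.symm i) (key u v huv i)

lemma mulVec_inv_mulVec (hW : ∀ i j, 0 ≤ W i j) (hrow : ∀ i, ∑ j, W i j = 1)
    (hγ : 0 ≤ γ) (hd : ∀ i, γ < d i) (v : Fin n → ℝ) :
    (diagonal d - γ • W) *ᵥ ((diagonal d - γ • W)⁻¹ *ᵥ v) = v := by
  rw [mulVec_mulVec, mul_nonsing_inv _ ((isUnit_iff_isUnit_det _).1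
    (isUnit_diagonal_sub_smul hW hrow hγ hd)), one_mulVec]

end MinimumPrinciple

/-- Inefficiency of the equilibrium: for a symmetric network
with uniform peer-effect strength `γ` and strictly positive intercepts `a`,
every component of the socially optimal consumption
`x° = (C + B/2 + γI - γW)⁻¹ (a/2)` strictly exceeds the corresponding
component of the equilibrium consumption
`x* = (C + B + 2γI - γW)⁻¹ (a/2)`. -/
theorem equilibrium_inefficiency
    (n : ℕ) (hn : 1 ≤ n)
    (W : Matrix (Fin n) (Fin n) ℝ) (hWsymm : Wᵀ = W)
    (hWdiag : ∀ i, W i i = 0)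
    (hWnonneg : ∀ i j, 0 ≤ W i j)
    (hWrow : ∀ i, ∑ j, W i j = 1)
    (b c : Fin n → ℝ) (hb : ∀ i, 0 < b i) (hc : ∀ i, 0 ≤ c i)
    (γ : ℝ) (hγ : 0 ≤ γ)
    (B : Matrix (Fin n) (Fin n) ℝ) (hB : B = Matrix.diagonal (fun i => 2 * b i))
    (C : Matrix (Fin n) (Fin n) ℝ) (hC : C = Matrix.diagonal c)
    (a : Fin n → ℝ) (ha : ∀ i, 0 < a i)
    (xo xstar : Fin n → ℝ)
    (hxo : xo = (C + (1 / 2 : ℝ) • B + γ • (1 : Matrix (Fin n) (Fin n) ℝ)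
      - γ • W)⁻¹ *ᵥ ((1 / 2 : ℝ) • a))
    (hxstar : xstar = (C + B + (2 * γ) • (1 : Matrix (Fin n) (Fin n) ℝ)
      - γ • W)⁻¹ *ᵥ ((1 / 2 : ℝ) • a)) :
    ∀ i, xstar i < xo i := by
  have eo : C + (1 / 2 : ℝ) • B + γ • (1 : Matrix (Fin n) (Fin n) ℝ)
      = diagonal fun i => c i + b i + γ := by
    subst hB hC
    ext i j
    by_cases h : i = j
    · subst h; simp
    · simp [h]
  have es : C + B + (2 * γ) • (1 : Matrix (Fin n) (Fin n) ℝ)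
      = diagonal fun i => c i + 2 * b i + 2 * γ := by
    subst hB hC
    ext i j
    by_cases h : i = j
    · subst h; simp
    · simp [h]
  rw [eo] at hxo
  rw [es] at hxstar
  have hdo : ∀ i, γ < c i + b i + γ := fun i => by linarith [hb i, hc i]
  have hds : ∀ i, γ < c i + 2 * b i + 2 * γ := fun i => by linarith [hb i, hc i]
  have ho := mulVec_inv_mulVec hWnonneg hWrow hγ hdo ((1 / 2 : ℝ) • a)
  have hs := mulVec_inv_mulVec hWnonneg hWrow hγ hds ((1 / 2 : ℝ) • a)
  rw [← hxo] at ho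
  rw [← hxstar] at hs
  have hpos : ∀ i, 0 < xstar i := pos_of_mulVec_pos hWnonneg hWrow hγ hds fun i => by
    rw [hs]
    simpa using ha i
  refine fun i => sub_pos.1 <|
    pos_of_mulVec_pos (y := xo - xstar) hWnonneg hWrow hγ hdo (fun i => ?_) i
  have hsi := congrFun hs i
  rw [diagonal_sub_smul_mulVec_apply] at hsi
  rw [mulVec_sub, ho, Pi.sub_apply, diagonal_sub_smul_mulVec_apply, ← hsi]
  have hgap : 0 < (b i + γ) * xstar i := mul_pos (by linarith [hb i]) (hpos i)
  linarith
end

section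
/- Let n ≥ 1, let A be an n×n real matrix that is strictly row diagonally dominant with strictly positive diagonal entries and nonpositive off-diagonal entries (i.e., A_{ii} > Σ_{j≠i}|A_{ij}| and A_{ij} ≤ 0 for i ≠ j), let D be a diagonal matrix with strictly positive diagonal entries, and let v ∈ ℝⁿ have all entries strictly positive. Then A and A + D are invertible and every component of A⁻¹v is strictly greater than the corresponding component of (A + D)⁻¹v. -/
open Matrix

/-!
The argument rests on the minimum principle for strictly row diagonally dominant matrices with
nonpositive off-diagonal entries (`pos_of_mulVec_pos`): if `M x` is entrywise positive, so is `x`.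
Both `A` and `A + D` are of this kind, and they are invertible by Gershgorin's theorem. Put
`y = (A + D)⁻¹ v` and `z = A⁻¹ v`. The principle for `A + D` gives `0 < y`, hence
`A (z - y) = v - (v - D y) = D y` is entrywise positive, and the principle for `A` gives `y < z`.
-/

/-- Minimum principle: at an index `i` where `x` is minimal, `(M x) i` is at most `x i` times the
`i`-th row sum of `M`, which is positive, so `x i ≤ 0` would contradict `0 < (M x) i`. -/
lemma pos_of_mulVec_pos_s18 {n : ℕ} {M : Matrix (Fin n) (Fin n) ℝ}
    (hdom : ∀ i, ∑ j ∈ Finset.univ.erase i, |M i j| < M i i)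
    (hoff : ∀ i j, i ≠ j → M i j ≤ 0)
    {x : Fin n → ℝ} (hx : ∀ i, 0 < (M *ᵥ x) i) (k : Fin n) : 0 < x k := by
  have : Nonempty (Fin n) := ⟨k⟩
  obtain ⟨i, hi⟩ := Finite.exists_min x
  refine lt_of_lt_of_le ?_ (hi k)
  by_contra! hneg
  have hsplit : (M *ᵥ x) i = M i i * x i + ∑ j ∈ Finset.univ.erase i, M i j * x j :=
    (Finset.add_sum_erase _ (fun j => M i j * x j) (Finset.mem_univ i)).symm
  have hle : ∑ j ∈ Finset.univ.erase i, M i j * x j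
      ≤ -(∑ j ∈ Finset.univ.erase i, |M i j|) * x i := by
    rw [← Finset.sum_neg_distrib, Finset.sum_mul]
    refine Finset.sum_le_sum fun j hj => ?_
    have hM := hoff i j (Finset.ne_of_mem_erase hj).symm
    rw [abs_of_nonpos hM, neg_neg]
    exact mul_le_mul_of_nonpos_left (hi j) hM
  nlinarith [hx i, mul_nonneg (sub_nonneg.2 (hdom i).le) (neg_nonneg.2 hneg)]

lemma isUnit_det_of_dominant {n : ℕ} {M : Matrix (Fin n) (Fin n) ℝ}
    (hdom : ∀ i, ∑ j ∈ Finset.univ.erase i, |M i j| < M i i) : IsUnit M.det :=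
  isUnit_iff_ne_zero.2 <| det_ne_zero_of_sum_row_lt_diag fun k =>
    (hdom k).trans_le (le_abs_self _)

/-- Entrywise comparison of inverses of M-matrices: if `A` is
strictly row diagonally dominant with strictly positive diagonal and
nonpositive off-diagonal entries, `D` is a diagonal matrix with strictly
positive diagonal, and `v` is entrywise strictly positive, then `A` and
`A + D` are invertible and `(A + D)⁻¹ v < A⁻¹ v` componentwise. -/
theorem m_matrix_inverse_comparison
    (n : ℕ) (hn : 1 ≤ n)
    (A : Matrix (Fin n) (Fin n) ℝ)
    (hdom : ∀ i, ∑ j ∈ Finset.univ.erase i, |A i j| < A i i)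
    (hdiag : ∀ i, 0 < A i i)
    (hoff : ∀ i j, i ≠ j → A i j ≤ 0)
    (d : Fin n → ℝ) (hd : ∀ i, 0 < d i)
    (D : Matrix (Fin n) (Fin n) ℝ) (hD : D = Matrix.diagonal d)
    (v : Fin n → ℝ) (hv : ∀ i, 0 < v i) :
    IsUnit A ∧ IsUnit (A + D) ∧ ∀ i, ((A + D)⁻¹ *ᵥ v) i < (A⁻¹ *ᵥ v) i := by
  subst hD
  have hoff' : ∀ i j, i ≠ j → (A + diagonal d) i j = A i j := fun i j hij => by
    simp [diagonal_apply_ne d hij]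
  have hdom' : ∀ i, ∑ j ∈ Finset.univ.erase i, |(A + diagonal d) i j|
      < (A + diagonal d) i i := fun i => by
    rw [Finset.sum_congr rfl fun j hj => by rw [hoff' i j (Finset.ne_of_mem_erase hj).symm]]
    simpa using (hdom i).trans (lt_add_of_pos_right _ (hd i))
  have hA := isUnit_det_of_dominant hdom
  have hAD := isUnit_det_of_dominant hdom'
  refine ⟨(isUnit_iff_isUnit_det _).2 hA, (isUnit_iff_isUnit_det _).2 hAD, fun i => ?_⟩
  set y := (A + diagonal d)⁻¹ *ᵥ v with hy
  set z := A⁻¹ *ᵥ v with hz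
  have hADy : (A + diagonal d) *ᵥ y = v := by
    rw [hy, mulVec_mulVec, mul_nonsing_inv _ hAD, one_mulVec]
  have hAz : A *ᵥ z = v := by
    rw [hz, mulVec_mulVec, mul_nonsing_inv _ hA, one_mulVec]
  have hypos : ∀ k, 0 < y k :=
    pos_of_mulVec_pos_s18 hdom' (fun i j hij => (hoff' i j hij).trans_le (hoff i j hij))
      fun k => by rw [hADy]; exact hv k
  have hdiff : A *ᵥ (z - y) = diagonal d *ᵥ y := by
    rw [mulVec_sub, hAz, ← hADy, add_mulVec, add_sub_cancel_left]
  refine sub_pos.1 (pos_of_mulVec_pos_s18 hdom hoff (x := z - y) (fun k => ?_) i)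
  rw [hdiff, mulVec_diagonal]
  exact mul_pos (hd k) (hypos k)
end
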